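/- Let n ≥ 1, let a ∈ L^∞(ℝⁿ;ℂ), and let η ∈ ℝⁿ be a Lebesgue point of a. Let ρ > 1 and let φ ∈ C_c^∞(ℝⁿ) be even and satisfy 0 ≤ φ ≤ 1, φ(x) = 1 for |x| ≤ 1, and φ(x) = 0 for |x| ≥ ρ. For δ > 0 and y ∈ ℝⁿ define f_{δ,η,y}(x) := e^{i η·(x−y)} φ(δ(x−y)). Then for every ε > 0 there exists δ_ε > 0 such that for all δ ∈ (0, δ_ε) and all x, y ∈ ℝⁿ, |(F^{-1}(a · F f_{δ,η,y}))(x) − a(η) f_{δ,η,y}(x)| < ε, where F f_{δ,η,y} is a Schwartz function, hence a · F f_{δ,η,y} ∈ L¹(ℝⁿ) and F^{-1} is applied as a pointwise-defined integral. -/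

import Mathlib

open MeasureTheory Filter Metric Complex ENNReal NNReal

noncomputable section

abbrev Eucl (n : ℕ) := EuclideanSpace ℝ (Fin n)

/-- The Fourier integral of an integrable function, with the convention
`(Fh)(ξ) = ∫ h(x) e^{-i x·ξ} dx`. -/
def fourierInt {n : ℕ} (h : Eucl n → ℂ) (ξ : Eucl n) : ℂ :=
  ∫ x : Eucl n, Complex.exp (-(Complex.I * ((inner ℝ x ξ : ℝ) : ℂ))) * h x

/-- The inverse Fourier integral `(F⁻¹h)(x) = (2π)^{-n} ∫ h(ξ) e^{i x·ξ} dξ`. -/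
def fourierIntInv {n : ℕ} (h : Eucl n → ℂ) (x : Eucl n) : ℂ :=
  (((2 * Real.pi) ^ n : ℝ)⁻¹ : ℂ) •
    ∫ ξ : Eucl n, Complex.exp (Complex.I * ((inner ℝ x ξ : ℝ) : ℂ)) * h ξ

/-- The test function `f_{δ,η,y}(x) = e^{i η·(x-y)} φ(δ(x-y))`. -/
def testFun {n : ℕ} (η y : Eucl n) (δ : ℝ) (φ : Eucl n → ℝ) (x : Eucl n) : ℂ :=
  Complex.exp (Complex.I * ((inner ℝ η (x - y) : ℝ) : ℂ)) * (φ (δ • (x - y)) : ℂ)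

open scoped FourierTransform SchwartzMap

theorem fourierInt_eq {n : ℕ} (h : Eucl n → ℂ) (ξ : Eucl n) :
    fourierInt h ξ = 𝓕 h ((2 * Real.pi)⁻¹ • ξ) := by
  rw [fourierInt, Real.fourier_eq']
  congr 1
  ext x
  rw [smul_eq_mul]
  congr 2
  rw [inner_smul_right]
  have : (-2 * Real.pi * ((2 * Real.pi)⁻¹ * inner ℝ x ξ) : ℝ) = - inner ℝ x ξ := by
    field_simp
  rw [this]
  push_cast
  ring

theorem fourierIntInv_eq {n : ℕ} (h : Eucl n → ℂ) (x : Eucl n) :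
    fourierIntInv h x = 𝓕⁻ (fun w => h ((2 * Real.pi) • w)) x := by
  rw [fourierIntInv, Real.fourierInv_eq']
  have h1 := Measure.integral_comp_smul (volume : Measure (Eucl n))
    (fun ξ => Complex.exp (Complex.I * ((inner ℝ x ξ : ℝ) : ℂ)) * h ξ) (2 * Real.pi)
  have h2 : |((2 * Real.pi) ^ Module.finrank ℝ (Eucl n))⁻¹| = ((2 * Real.pi) ^ n)⁻¹ := by
    rw [finrank_euclideanSpace_fin, abs_of_nonneg (by positivity)]
  rw [h2] at h1
  rw [← Complex.ofReal_inv, Complex.coe_smul, ← h1]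
  congr 1
  ext w
  rw [smul_eq_mul]
  congr 2
  rw [inner_smul_right, real_inner_comm]
  push_cast
  ring

theorem fourierInt_integrable {n : ℕ} (S : 𝓢(Eucl n, ℂ)) : Integrable (fourierInt (S : Eucl n → ℂ)) := by
  have h : fourierInt (S : Eucl n → ℂ) = fun ξ => (𝓕 S) ((2 * Real.pi)⁻¹ • ξ) := by
    ext ξ; rw [fourierInt_eq, SchwartzMap.fourier_coe]
  rw [h]
  exact (integrable_comp_smul_iff volume _ (by positivity)).2 (𝓕 S).integrable

theorem fourierInt_bdd {n : ℕ} (S : 𝓢(Eucl n, ℂ)) : ∃ K : ℝ≥0, ∀ ξ, ‖fourierInt (S : Eucl n → ℂ) ξ‖ₑ ≤ K := by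
  refine ⟨(∫ x, ‖S x‖).toNNReal, fun ξ => ?_⟩
  have : ‖fourierInt (S : Eucl n → ℂ) ξ‖ ≤ ∫ x, ‖S x‖ := by
    rw [fourierInt]
    refine (norm_integral_le_integral_norm _).trans (le_of_eq ?_)
    congr 1
    ext x
    rw [norm_mul, Complex.norm_exp]
    simp
  rw [← ofReal_norm]
  exact ENNReal.ofReal_le_ofReal this

theorem fourierIntInv_fourierInt {n : ℕ} (S : 𝓢(Eucl n, ℂ)) (x : Eucl n) :
    fourierIntInv (fourierInt (S : Eucl n → ℂ)) x = S x := by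
  rw [fourierIntInv_eq]
  have : (fun w => fourierInt (S : Eucl n → ℂ) ((2 * Real.pi) • w)) = 𝓕 (S : Eucl n → ℂ) := by
    ext w
    rw [fourierInt_eq, smul_smul, inv_mul_cancel₀ (by positivity), one_smul]
  rw [this, S.continuous.fourierInv_fourier_eq S.integrable]
  rw [← SchwartzMap.fourier_coe]
  exact (𝓕 S).integrable

theorem norm_fourierInt_testFun {n : ℕ} (η y : Eucl n) (δ : ℝ) (hδ : 0 < δ) (φ : Eucl n → ℝ)
    (ξ : Eucl n) :
    ‖fourierInt (testFun η y δ φ) ξ‖ₑ =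
      ENNReal.ofReal ((δ ^ n)⁻¹) * ‖fourierInt (fun x => (φ x : ℂ)) (δ⁻¹ • (ξ - η))‖ₑ := by
  have h1 : fourierInt (testFun η y δ φ) ξ = Complex.exp (-(Complex.I * ((inner ℝ y ξ : ℝ) : ℂ))) *
      ∫ u : Eucl n, (fun v : Eucl n => Complex.exp (-(Complex.I *
        ((inner ℝ v (δ⁻¹ • (ξ - η)) : ℝ) : ℂ))) * (φ v : ℂ)) (δ • u) := by
    rw [← integral_const_mul, fourierInt, ← integral_add_right_eq_self _ y]
    congr 1
    ext u
    simp only [testFun, add_sub_cancel_right]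
    rw [← mul_assoc, ← mul_assoc, ← Complex.exp_add, ← Complex.exp_add]
    congr 2
    rw [inner_smul_left, inner_smul_right, inner_sub_right, inner_add_left, real_inner_comm u η]
    have : (starRingEnd ℝ) δ * (δ⁻¹ * (inner ℝ u ξ - inner ℝ u η)) = inner ℝ u ξ - inner ℝ u η := by
      simp; field_simp
    rw [this]
    push_cast
    rw [real_inner_comm η u]
    ring
  rw [h1, Measure.integral_comp_smul volume (fun v : Eucl n => Complex.exp (-(Complex.I *
        ((inner ℝ v (δ⁻¹ • (ξ - η)) : ℝ) : ℂ))) * (φ v : ℂ)) δ, finrank_euclideanSpace_fin, abs_of_nonneg (by positivity)]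
  rw [enorm_mul, enorm_smul, ← fourierInt]
  have : ‖Complex.exp (-(Complex.I * ((inner ℝ y ξ : ℝ) : ℂ)))‖ₑ = 1 := by
    rw [← ofReal_norm, Complex.norm_exp]; simp
  rw [this, one_mul, Real.enorm_of_nonneg (by positivity)]

theorem lintegral_scale {n : ℕ} (η : Eucl n) (δ : ℝ) (hδ : 0 < δ) (g : Eucl n → ℝ≥0∞) :
    ∫⁻ ξ, ENNReal.ofReal ((δ ^ n)⁻¹) * g (δ⁻¹ • (ξ - η)) = ∫⁻ ζ, g ζ := by
  rw [lintegral_const_mul' _ _ ENNReal.ofReal_ne_top]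
  rw [lintegral_sub_right_eq_self (fun ξ => g (δ⁻¹ • ξ)) η]
  have h := Measure.map_addHaar_smul (volume : Measure (Eucl n)) (inv_ne_zero hδ.ne')
  have h2 : ∫⁻ ξ, g (δ⁻¹ • ξ) = ∫⁻ ζ, g ζ ∂(Measure.map (δ⁻¹ • ·) (volume : Measure (Eucl n))) :=
    (lintegral_map_equiv g (Homeomorph.smulOfNeZero δ⁻¹ (inv_ne_zero hδ.ne')).toMeasurableEquiv).symm
  rw [h2, h, lintegral_smul_measure, finrank_euclideanSpace_fin, abs_of_nonneg (by positivity),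
    smul_eq_mul, ← mul_assoc, ← ENNReal.ofReal_mul (by positivity)]
  have : (δ ^ n)⁻¹ * ((δ⁻¹) ^ n)⁻¹ = 1 := by
    rw [inv_pow, inv_inv, inv_mul_cancel₀ (by positivity)]
  rw [this]; simp

theorem tail_small {n : ℕ} (g : Eucl n → ℝ≥0∞) (hg : ∫⁻ ζ, g ζ ≠ ⊤) :
    Tendsto (fun N : ℕ => ∫⁻ ζ in (ball (0 : Eucl n) N)ᶜ, g ζ) atTop (nhds 0) := by
  have hs : ∀ N : ℕ, MeasurableSet (ball (0 : Eucl n) N)ᶜ := fun N => measurableSet_ball.compl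
  have h := tendsto_measure_iInter_atTop (μ := volume.withDensity g)
    (s := fun N : ℕ => (ball (0 : Eucl n) N)ᶜ) (fun N => (hs N).nullMeasurableSet)
    (fun m k hmk => by
      apply Set.compl_subset_compl.2
      apply ball_subset_ball
      exact_mod_cast hmk)
    ⟨0, by
      rw [withDensity_apply _ (hs 0)]
      exact ne_top_of_le_ne_top hg (setLIntegral_le_lintegral _ _)⟩
  have he : (⋂ N : ℕ, (ball (0 : Eucl n) N)ᶜ) = ∅ := by
    rw [← Set.compl_iUnion, iUnion_ball_nat, Set.compl_univ]
  rw [he, measure_empty] at h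
  refine h.congr fun N => ?_
  exact withDensity_apply _ (hs N)

theorem core {n : ℕ} (a : Eucl n → ℂ) (η : Eucl n) (A : ℝ≥0)
    (hA : ∀ᵐ ξ, ‖a ξ - a η‖ₑ ≤ A)
    (hη : Tendsto
      (fun R : ℝ => (volume (ball η R))⁻¹ * ∫⁻ ξ in ball η R, (‖a ξ - a η‖₊ : ℝ≥0∞))
      (nhdsWithin 0 (Set.Ioi 0)) (nhds 0))
    (g : Eucl n → ℝ≥0∞) (hg : ∫⁻ ζ, g ζ ≠ ⊤) (K : ℝ≥0) (hK : ∀ ζ, g ζ ≤ K)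
    (ε : ℝ≥0∞) (hε : 0 < ε) :
    ∃ δε : ℝ, 0 < δε ∧ ∀ δ : ℝ, 0 < δ → δ < δε →
      ∫⁻ ξ, ‖a ξ - a η‖ₑ * (ENNReal.ofReal ((δ ^ n)⁻¹) * g (δ⁻¹ • (ξ - η))) < ε := by
  have hε2 : 0 < ε / 2 := ENNReal.half_pos hε.ne'
  -- choose the tail
  have ht : Tendsto (fun N : ℕ => (A : ℝ≥0∞) * ∫⁻ ζ in (ball (0 : Eucl n) N)ᶜ, g ζ) atTop
      (nhds 0) := by
    have := ENNReal.Tendsto.const_mul (a := (A : ℝ≥0∞)) (tail_small g hg) (Or.inr ENNReal.coe_ne_top)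
    simpa using this
  obtain ⟨N, hN, hN1⟩ := ((ht.eventually (gt_mem_nhds hε2)).and (eventually_ge_atTop 1)).exists
  have hNpos : (0 : ℝ) < N := by exact_mod_cast hN1
  -- the ball part
  set V : ℝ≥0∞ := volume (ball (0 : Eucl n) N) with hV
  have hVt : V ≠ ⊤ := measure_ball_lt_top.ne
  have hb : Tendsto (fun R : ℝ => ((K : ℝ≥0∞) * V) *
      ((volume (ball η R))⁻¹ * ∫⁻ ξ in ball η R, (‖a ξ - a η‖₊ : ℝ≥0∞)))
      (nhdsWithin 0 (Set.Ioi 0)) (nhds 0) := by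
    have := ENNReal.Tendsto.const_mul (a := (K : ℝ≥0∞) * V) hη
      (Or.inr (ENNReal.mul_ne_top ENNReal.coe_ne_top hVt))
    simpa using this
  have hb' := hb.eventually (gt_mem_nhds hε2)
  rw [eventually_nhdsWithin_iff, Metric.eventually_nhds_iff] at hb'
  obtain ⟨r, hr, hb'⟩ := hb'
  refine ⟨r / N, by positivity, fun δ hδ hδr => ?_⟩
  have hδN : 0 < δ * N := by positivity
  have hlt : δ * N < r := (lt_div_iff₀ hNpos).1 hδr
  have hball := hb' (y := δ * N) (by simpa [abs_of_pos hδ] using hlt) hδN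
  rw [← lintegral_add_compl _ (measurableSet_ball (x := η) (ε := δ * N)), ← ENNReal.add_halves ε]
  refine ENNReal.add_lt_add (lt_of_le_of_lt ?_ hball) (lt_of_le_of_lt ?_ hN)
  · have hvol : volume (ball η (δ * N)) = ENNReal.ofReal (δ ^ n) * V := by
      rw [Measure.addHaar_ball_mul_of_pos _ _ hδ, finrank_euclideanSpace_fin]
    have hV0 : V ≠ 0 := (measure_ball_pos _ _ hNpos).ne'
    have hd : ENNReal.ofReal ((δ ^ n)⁻¹) = V * (volume (ball η (δ * N)))⁻¹ := by
      rw [hvol, ENNReal.mul_inv (Or.inr hVt) (Or.inr hV0), mul_left_comm,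
        ENNReal.mul_inv_cancel hV0 hVt, mul_one, ENNReal.ofReal_inv_of_pos (by positivity)]
    calc ∫⁻ ξ in ball η (δ * N), ‖a ξ - a η‖ₑ * (ENNReal.ofReal ((δ ^ n)⁻¹) * g (δ⁻¹ • (ξ - η)))
        ≤ ∫⁻ ξ in ball η (δ * N), (ENNReal.ofReal ((δ ^ n)⁻¹) * K) * ‖a ξ - a η‖ₑ := by
          refine lintegral_mono fun ξ => ?_
          rw [mul_comm]
          gcongr
          exact hK _
      _ = (ENNReal.ofReal ((δ ^ n)⁻¹) * K) * ∫⁻ ξ in ball η (δ * N), ‖a ξ - a η‖ₑ :=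
          lintegral_const_mul' _ _ (ENNReal.mul_ne_top ENNReal.ofReal_ne_top ENNReal.coe_ne_top)
      _ ≤ _ := by
          rw [hd]
          apply le_of_eq
          simp only [enorm_eq_nnnorm]
          ring
  · rw [← lintegral_indicator measurableSet_ball.compl, ← lintegral_indicator measurableSet_ball.compl,
      ← lintegral_scale η δ hδ ((ball (0 : Eucl n) N)ᶜ.indicator g), ← lintegral_const_mul' _ _ ENNReal.coe_ne_top]
    refine lintegral_mono_ae ?_
    filter_upwards [hA] with ξ hξ
    by_cases h : ξ ∈ (ball η (δ * N))ᶜ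
    · have h' : δ⁻¹ • (ξ - η) ∈ (ball (0 : Eucl n) N)ᶜ := by
        simp only [Set.mem_compl_iff, mem_ball, not_lt, dist_eq_norm, sub_zero] at h ⊢
        rw [norm_smul, norm_inv, Real.norm_of_nonneg hδ.le, inv_mul_eq_div, le_div_iff₀ hδ]
        linarith
      rw [Set.indicator_of_mem h, Set.indicator_of_mem h']
      gcongr
    · rw [Set.indicator_of_notMem h]
      exact zero_le

theorem testFun_schwartz {n : ℕ} (η y : Eucl n) (δ : ℝ) (hδ : 0 < δ) (φ : Eucl n → ℝ)
    (hφsmooth : ContDiff ℝ (⊤ : ℕ∞) φ) (hφsupp : HasCompactSupport φ) :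
    ∃ S : 𝓢(Eucl n, ℂ), (S : Eucl n → ℂ) = testFun η y δ φ := by
  have h1 : ContDiff ℝ (⊤ : ℕ∞) (testFun η y δ φ) := by
    unfold testFun
    refine ContDiff.mul ?_ ?_
    · refine ContDiff.cexp (contDiff_const.mul (Complex.ofRealCLM.contDiff.comp ?_))
      exact contDiff_const.inner ℝ (contDiff_id.sub contDiff_const)
    · refine Complex.ofRealCLM.contDiff.comp (hφsmooth.comp ?_)
      fun_prop
  have h2 : HasCompactSupport (testFun η y δ φ) := by
    have h3 : HasCompactSupport (fun x : Eucl n => φ (δ • (x - y))) :=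
      hφsupp.comp_homeomorph ((Homeomorph.subRight y).trans (Homeomorph.smulOfNeZero δ hδ.ne'))
    have h4 : HasCompactSupport (fun x : Eucl n => ((φ (δ • (x - y)) : ℝ) : ℂ)) :=
      h3.comp_left (g := fun t : ℝ => (t : ℂ)) Complex.ofReal_zero
    exact h4.mul_left
  exact ⟨h2.toSchwartzMap h1, rfl⟩

/-- at a Lebesgue point `η` of `a ∈ L^∞(ℝⁿ;ℂ)`, the functions
`F⁻¹(a · F f_{δ,η,y})` converge to `a(η) f_{δ,η,y}` uniformly in `x` and `y` as `δ → 0⁺`. -/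
theorem approx_at_Lebesgue_point (n : ℕ) (hn : 1 ≤ n)
    (a : Eucl n → ℂ) (ha : MemLp a ⊤ (volume : Measure (Eucl n))) (η : Eucl n)
    (hη : Tendsto
      (fun R : ℝ => (volume (ball η R))⁻¹ * ∫⁻ ξ in ball η R, (‖a ξ - a η‖₊ : ℝ≥0∞))
      (nhdsWithin 0 (Set.Ioi 0)) (nhds 0))
    (ρ : ℝ) (hρ : 1 < ρ) (φ : Eucl n → ℝ) (hφsmooth : ContDiff ℝ (⊤ : ℕ∞) φ)
    (hφsupp : HasCompactSupport φ) (hφeven : ∀ x, φ (-x) = φ x)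
    (hφ0 : ∀ x, 0 ≤ φ x) (hφ1 : ∀ x, φ x ≤ 1)
    (hφone : ∀ x : Eucl n, ‖x‖ ≤ 1 → φ x = 1)
    (hφzero : ∀ x : Eucl n, ρ ≤ ‖x‖ → φ x = 0) :
    ∀ ε : ℝ, 0 < ε → ∃ δε : ℝ, 0 < δε ∧ ∀ δ : ℝ, 0 < δ → δ < δε → ∀ x y : Eucl n,
      ‖fourierIntInv (fun ξ => a ξ * fourierInt (testFun η y δ φ) ξ) x
        - a η * testFun η y δ φ x‖ < ε := by
  intro ε hε
  obtain ⟨S₀, hS₀⟩ : ∃ S : 𝓢(Eucl n, ℂ), (S : Eucl n → ℂ) = fun x => (φ x : ℂ) := by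
    obtain ⟨S, hS⟩ := testFun_schwartz 0 0 1 one_pos φ hφsmooth hφsupp
    refine ⟨S, ?_⟩
    rw [hS]
    ext x
    simp [testFun]
  obtain ⟨K, hK⟩ := fourierInt_bdd S₀
  have hI := fourierInt_integrable S₀
  rw [hS₀] at hK hI
  have hconst : MemLp (fun _ : Eucl n => a η) ⊤ (volume : Measure (Eucl n)) := memLp_top_const _
  have hsub : MemLp (fun ξ => a ξ - a η) ⊤ (volume : Measure (Eucl n)) := ha.sub hconst
  have hA : ∀ᵐ ξ, ‖a ξ - a η‖ₑ ≤ ((eLpNorm (fun ξ => a ξ - a η) ⊤ volume).toNNReal : ℝ≥0) := by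
    rw [ENNReal.coe_toNNReal hsub.eLpNorm_ne_top, eLpNorm_exponent_top]
    exact enorm_ae_le_eLpNormEssSup _ _
  set c : ℝ := (2 * Real.pi) ^ n with hc
  have hcpos : 0 < c := by positivity
  obtain ⟨δε, hδε, H⟩ := core a η _ hA hη (fun ζ => ‖fourierInt (fun x => (φ x : ℂ)) ζ‖ₑ)
    hI.2.ne K hK (ENNReal.ofReal (c * ε)) (by simpa using by positivity)
  refine ⟨δε, hδε, fun δ hδ hlt x y => ?_⟩
  have H' := H δ hδ hlt
  simp only [← norm_fourierInt_testFun η y δ hδ φ] at H'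
  obtain ⟨S, hS⟩ := testFun_schwartz η y δ hδ φ hφsmooth hφsupp
  have hSI := fourierInt_integrable S
  have hinv := fourierIntInv_fourierInt S x
  rw [hS] at hSI hinv
  set G := fourierInt (testFun η y δ φ) with hG
  have hexp : ∀ ξ : Eucl n, ‖Complex.exp (Complex.I * ((inner ℝ x ξ : ℝ) : ℂ))‖ = 1 := by
    intro ξ; rw [Complex.norm_exp]; simp
  have hcont : Continuous fun ξ : Eucl n => Complex.exp (Complex.I * ((inner ℝ x ξ : ℝ) : ℂ)) := by
    fun_prop
  have i0 : Integrable fun ξ => Complex.exp (Complex.I * ((inner ℝ x ξ : ℝ) : ℂ)) * G ξ :=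
    hSI.bdd_mul (c := 1) hcont.aestronglyMeasurable (ae_of_all _ fun ξ => (hexp ξ).le)
  have i1 : Integrable fun ξ => Complex.exp (Complex.I * ((inner ℝ x ξ : ℝ) : ℂ)) * (a ξ * G ξ) := by
    have : Integrable fun ξ => a ξ *
        (Complex.exp (Complex.I * ((inner ℝ x ξ : ℝ) : ℂ)) * G ξ) := by
      refine i0.bdd_mul (c := (eLpNormEssSup a volume).toReal) ha.1 ?_
      have hfin : eLpNormEssSup a volume ≠ ⊤ := by
        rw [← eLpNorm_exponent_top]; exact ha.eLpNorm_ne_top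
      filter_upwards [enorm_ae_le_eLpNormEssSup a volume] with ξ hξ
      rw [← toReal_enorm]
      exact ENNReal.toReal_mono hfin hξ
    refine this.congr (ae_of_all _ fun ξ => ?_)
    simp only
    ring
  have key : fourierIntInv (fun ξ => a ξ * G ξ) x - a η * testFun η y δ φ x =
      ((c⁻¹ : ℝ) : ℂ) * ∫ ξ, Complex.exp (Complex.I * ((inner ℝ x ξ : ℝ) : ℂ)) *
        ((a ξ - a η) * G ξ) := by
    have e1 : (fun ξ => Complex.exp (Complex.I * ((inner ℝ x ξ : ℝ) : ℂ)) *
        ((a ξ - a η) * G ξ)) = fun ξ =>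
        Complex.exp (Complex.I * ((inner ℝ x ξ : ℝ) : ℂ)) * (a ξ * G ξ) -
        a η * (Complex.exp (Complex.I * ((inner ℝ x ξ : ℝ) : ℂ)) * G ξ) := by
      ext ξ; ring
    rw [e1, integral_sub i1 (i0.const_mul _), integral_const_mul, ← hinv]
    simp only [fourierIntInv, smul_eq_mul, ← hc]
    rw [Complex.ofReal_inv]
    ring
  rw [key, norm_mul, Complex.norm_real, Real.norm_of_nonneg (by positivity), inv_mul_lt_iff₀ hcpos]
  rw [← ENNReal.ofReal_lt_ofReal_iff (by positivity), ofReal_norm]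
  refine lt_of_le_of_lt (enorm_integral_le_lintegral_enorm _) (lt_of_le_of_lt (le_of_eq ?_) H')
  congr 1
  ext ξ
  rw [enorm_mul, enorm_mul, ← ofReal_norm, hexp]
  simp

end
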